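/- There exists a constant C₁ > 1 such that for every integer x ≥ 2 and every element W of N(∞) with |W| ≤ x, W can be written as a product of at most C₁·x²·log₂(x) conjugates of elements of R(∞) ∪ R(∞)⁻¹. That is, the Dehn 2-function of the Lysenok presentation of the Grigorchuk 2-group Γ is bounded from above by C₁ x² log₂ x. -/

import Mathlib

/-- The four-letter alphabet `{a, b, c, d}`. -/
inductive L4 : Type
  | a | b | c | d
  deriving DecidableEq

/-- The free group `F = F(a, b, c, d)`. -/
abbrev F4 : Type := FreeGroup L4

def ga : F4 := FreeGroup.of L4.a
def gb : F4 := FreeGroup.of L4.b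
def gc : F4 := FreeGroup.of L4.c
def gd : F4 := FreeGroup.of L4.d

/-- The endomorphism `σ` of `F(a,b,c,d)`:
`σ(a) = aca`, `σ(b) = d`, `σ(c) = b`, `σ(d) = c`. -/
def sigma : F4 →* F4 :=
  FreeGroup.lift fun x => match x with
    | L4.a => ga * gc * ga
    | L4.b => gd
    | L4.c => gb
    | L4.d => gc

/-- The Lysenok relator set
`R(∞) = {a², b², c², d², bcd} ∪ {σⁱ((ad)⁴) : i ≥ 0} ∪ {σⁱ((adacac)⁴) : i ≥ 0}`. -/
def Rinf : Set F4 :=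
  {ga ^ 2, gb ^ 2, gc ^ 2, gd ^ 2, gb * gc * gd}
    ∪ {w | ∃ i : ℕ, w = (⇑sigma)^[i] ((ga * gd) ^ 4)}
    ∪ {w | ∃ i : ℕ, w = (⇑sigma)^[i] ((ga * gd * ga * gc * ga * gc) ^ 4)}

/-- `W` is a product of `L` conjugates of elements of `R ∪ R⁻¹`. -/
def IsProdConjPM {G : Type*} [Group G] (R : Set G) (L : ℕ) (W : G) : Prop :=
  ∃ f : Fin L → G,
    (∀ j, ∃ x r, r ∈ R ∧ (f j = x * r * x⁻¹ ∨ f j = x * r⁻¹ * x⁻¹)) ∧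
    W = (List.ofFn f).prod


namespace GDehn

/-- relators other than `a²` -/
def Ro : Set F4 :=
  {gb ^ 2, gc ^ 2, gd ^ 2, gb * gc * gd}
    ∪ {w | ∃ i : ℕ, w = (⇑sigma)^[i] ((ga * gd) ^ 4)}
    ∪ {w | ∃ i : ℕ, w = (⇑sigma)^[i] ((ga * gd * ga * gc * ga * gc) ^ 4)}

inductive Ar : ℕ → ℕ → F4 → Prop
  | one : Ar 0 0 1
  | relA : Ar 1 0 (ga ^ 2)
  | rel (r : F4) (h : r ∈ Ro) : Ar 0 1 r
  | inv {p q : ℕ} {w : F4} (h : Ar p q w) : Ar p q w⁻¹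
  | conj {p q : ℕ} {w : F4} (g : F4) (h : Ar p q w) : Ar p q (g * w * g⁻¹)
  | mul {p q p' q' : ℕ} {w w' : F4} (h : Ar p q w) (h' : Ar p' q' w') :
      Ar (p + p') (q + q') (w * w')
  | mono {p q p' q' : ℕ} {w : F4} (h : Ar p q w) (hp : p ≤ p') (hq : q ≤ q') : Ar p' q' w

theorem Ro_sub {r : F4} (h : r ∈ Ro) : r ∈ Rinf := by
  simp only [Ro, Rinf, Set.mem_union, Set.mem_insert_iff, Set.mem_singleton_iff] at *
  tauto

theorem Rinf_cases {r : F4} (h : r ∈ Rinf) : r = ga ^ 2 ∨ r ∈ Ro := by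
  simp only [Ro, Rinf, Set.mem_union, Set.mem_insert_iff, Set.mem_singleton_iff] at *
  tauto

def Good (w : F4) : Prop := ∃ x r, r ∈ Rinf ∧ (w = x * r * x⁻¹ ∨ w = x * r⁻¹ * x⁻¹)

theorem isProd_iff (L : ℕ) (W : F4) :
    IsProdConjPM Rinf L W ↔ ∃ l : List F4, l.length = L ∧ (∀ w ∈ l, Good w) ∧ W = l.prod := by
  constructor
  · rintro ⟨f, hf, rfl⟩
    refine ⟨List.ofFn f, by simp, ?_, rfl⟩
    intro w hw
    rw [List.mem_ofFn] at hw
    obtain ⟨j, rfl⟩ := hw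
    exact hf j
  · rintro ⟨l, rfl, hl, rfl⟩
    refine ⟨l.get, fun j => hl _ (List.get_mem l j), ?_⟩
    rw [List.ofFn_get]

theorem good_inv {w : F4} (h : Good w) : Good w⁻¹ := by
  obtain ⟨x, r, hr, h | h⟩ := h
  · exact ⟨x, r, hr, Or.inr (by rw [h]; group)⟩
  · exact ⟨x, r, hr, Or.inl (by rw [h]; group)⟩

theorem good_conj {w : F4} (g : F4) (h : Good w) : Good (g * w * g⁻¹) := by
  obtain ⟨x, r, hr, h | h⟩ := h
  · exact ⟨g * x, r, hr, Or.inl (by rw [h]; group)⟩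
  · exact ⟨g * x, r, hr, Or.inr (by rw [h]; group)⟩

theorem good_rel {r : F4} (h : r ∈ Rinf) : Good r := ⟨1, r, h, Or.inl (by group)⟩

theorem Ar.toProd {p q : ℕ} {w : F4} (h : Ar p q w) :
    ∃ l : List F4, l.length ≤ p + q ∧ (∀ w ∈ l, Good w) ∧ w = l.prod := by
  induction h with
  | one => exact ⟨[], by simp, by simp, by simp⟩
  | relA => exact ⟨[ga ^ 2], by simp, by simpa using good_rel (by simp [Rinf]), by simp⟩
  | rel r h => exact ⟨[r], by simp, by simpa using good_rel (Ro_sub h), by simp⟩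
  | inv h ih =>
    obtain ⟨l, h1, h2, rfl⟩ := ih
    refine ⟨(l.map (fun x => x⁻¹)).reverse, by simpa using h1, ?_, ?_⟩
    · intro w hw
      simp only [List.mem_reverse, List.mem_map] at hw
      obtain ⟨a, ha, rfl⟩ := hw
      exact good_inv (h2 a ha)
    · exact List.prod_inv_reverse l
  | conj g h ih =>
    obtain ⟨l, h1, h2, rfl⟩ := ih
    refine ⟨l.map (fun x => g * x * g⁻¹), by simpa using h1, ?_, ?_⟩
    · intro w hw
      simp only [List.mem_map] at hw
      obtain ⟨a, ha, rfl⟩ := hw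
      exact good_conj g (h2 a ha)
    · clear h1 h2 h
      induction l with
      | nil => simp
      | cons x l ih => simp only [List.prod_cons, List.map_cons, ← ih]; group
  | mul h h' ih ih' =>
    obtain ⟨l, h1, h2, rfl⟩ := ih
    obtain ⟨l', h1', h2', rfl⟩ := ih'
    refine ⟨l ++ l', by rw [List.length_append]; omega, ?_, by simp⟩
    intro w hw
    rcases List.mem_append.1 hw with hw | hw
    · exact h2 w hw
    · exact h2' w hw
  | mono h hp hq ih =>
    obtain ⟨l, h1, h2, h3⟩ := ih
    exact ⟨l, by omega, h2, h3⟩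

abbrev NN : Subgroup F4 := Subgroup.normalClosure Rinf

theorem Ar.mem {p q : ℕ} {w : F4} (h : Ar p q w) : w ∈ NN := by
  induction h with
  | one => exact one_mem _
  | relA => exact Subgroup.subset_normalClosure (by simp [Rinf])
  | rel r h => exact Subgroup.subset_normalClosure (Ro_sub h)
  | inv h ih => exact inv_mem ih
  | conj g h ih => exact Subgroup.normalClosure_normal.conj_mem _ ih g
  | mul h h' ih ih' => exact mul_mem ih ih'
  | mono h hp hq ih => exact ih

theorem Ar.of_mem {w : F4} (h : w ∈ NN) : ∃ n, Ar n n w := by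
  have key : ∃ p q, Ar p q w := by
    let S : Subgroup F4 :=
      { carrier := {w | ∃ p q, Ar p q w}
        one_mem' := ⟨0, 0, Ar.one⟩
        mul_mem' := by
          rintro a b ⟨p, q, h⟩ ⟨p', q', h'⟩
          exact ⟨_, _, h.mul h'⟩
        inv_mem' := by
          rintro a ⟨p, q, h⟩
          exact ⟨_, _, h.inv⟩ }
    have hS : S.Normal := ⟨by
      rintro a ⟨p, q, h⟩ g
      exact ⟨_, _, h.conj g⟩⟩
    have : NN ≤ S := Subgroup.normalClosure_le_normal (by
      intro r hr
      rcases Rinf_cases hr with rfl | hr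
      · exact ⟨_, _, Ar.relA⟩
      · exact ⟨_, _, Ar.rel r hr⟩)
    exact this h
  obtain ⟨p, q, h⟩ := key
  exact ⟨p + q, h.mono (by omega) (by omega)⟩

theorem sigma_a : sigma ga = ga * gc * ga := by simp [sigma, ga]
theorem sigma_b : sigma gb = gd := by simp [sigma, gb]
theorem sigma_c : sigma gc = gb := by simp [sigma, gc]
theorem sigma_d : sigma gd = gc := by simp [sigma, gd]

theorem Ar.sig {p q : ℕ} {w : F4} (h : Ar p q w) : Ar (2 * p) (q + p) (sigma w) := by
  induction h with
  | one => simpa using Ar.one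
  | relA =>
    have h1 : Ar 0 1 (gc ^ 2) := Ar.rel _ (by simp [Ro])
    have h2 := ((Ar.relA.conj (ga * gc)).mul (h1.conj ga)).mul Ar.relA
    rw [map_pow, sigma_a]
    convert h2 using 1
    simp only [pow_two]; group
  | rel r h =>
    simp only [Ro, Set.mem_union, Set.mem_insert_iff, Set.mem_singleton_iff, Set.mem_ofPred_eq] at h
    rcases h with ((rfl | rfl | rfl | rfl) | ⟨i, rfl⟩) | ⟨i, rfl⟩
    · rw [map_pow, sigma_b]; exact Ar.rel _ (by simp [Ro])
    · rw [map_pow, sigma_c]; exact Ar.rel _ (by simp [Ro])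
    · rw [map_pow, sigma_d]; exact Ar.rel _ (by simp [Ro])
    · have h1 : Ar 0 1 (gb * gc * gd) := Ar.rel _ (by simp [Ro])
      have h2 := h1.conj gd
      rw [map_mul, map_mul, sigma_b, sigma_c, sigma_d]
      convert h2 using 1
      group
    · rw [← Function.iterate_succ_apply' sigma]
      exact Ar.rel _ (Or.inl (Or.inr ⟨i + 1, rfl⟩))
    · rw [← Function.iterate_succ_apply' sigma]
      exact Ar.rel _ (Or.inr ⟨i + 1, rfl⟩)
  | inv h ih => rw [map_inv]; exact ih.inv
  | conj g h ih => rw [map_mul, map_mul, map_inv]; exact ih.conj _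
  | mul h h' ih ih' =>
    rw [map_mul]; exact (ih.mul ih').mono (by omega) (by omega)
  | mono h hp hq ih => exact ih.mono (by omega) (by omega)

/-- `u` and `v` differ by cost `n` -/
def E (n : ℕ) (u v : F4) : Prop := Ar n n (u * v⁻¹)

theorem E.refl (u : F4) : E 0 u u := by simpa [E] using Ar.one
theorem E.symm {n : ℕ} {u v : F4} (h : E n u v) : E n v u := by
  have := Ar.inv h
  simpa [E] using this
theorem E.trans {m n : ℕ} {u v w : F4} (h : E m u v) (h' : E n v w) : E (m + n) u w := by
  have := Ar.mul h h'
  simpa [E] using this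
theorem E.mul {m n : ℕ} {u v u' v' : F4} (h : E m u v) (h' : E n u' v') :
    E (m + n) (u * u') (v * v') := by
  have := Ar.mul (Ar.conj u h') h
  unfold E
  rw [add_comm m n]
  convert this using 1
  group
theorem E.mono {m n : ℕ} {u v : F4} (h : E m u v) (hn : m ≤ n) : E n u v := Ar.mono h hn hn
theorem E.left {n : ℕ} {u v : F4} (g : F4) (h : E n u v) : E n (g * u) (g * v) := by
  simpa using (E.refl g).mul h
theorem E.right {n : ℕ} {u v : F4} (g : F4) (h : E n u v) : E n (u * g) (v * g) := by
  simpa using h.mul (E.refl g)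
theorem E.ar {n p q : ℕ} {u v : F4} (h : E n u v) (h' : Ar p q v) : Ar (p + n) (q + n) u := by
  have := Ar.mul h h'
  rw [add_comm p, add_comm q]
  simpa using this

abbrev GG : Type := F4 ⧸ NN
abbrev pr : F4 →* GG := QuotientGroup.mk' NN

theorem pr_eq_one {w : F4} : pr w = 1 ↔ w ∈ NN := by
  rw [← MonoidHom.mem_ker, QuotientGroup.ker_mk']

theorem E.pr {n : ℕ} {u v : F4} (h : E n u v) : pr u = pr v := by
  have := pr_eq_one.2 (Ar.mem h)
  rw [map_mul, map_inv, mul_inv_eq_one] at this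
  exact this

theorem E.of_pr {u v : F4} (h : GDehn.pr u = GDehn.pr v) : ∃ n, E n u v := by
  apply Ar.of_mem
  rw [← pr_eq_one, map_mul, map_inv, h, mul_inv_cancel]

theorem fin_bound {ι : Type} [Finite ι] (f g : ι → F4) (h : ∀ i, pr (f i) = pr (g i)) :
    ∃ C, ∀ i, E C (f i) (g i) := by
  choose n hn using fun i => E.of_pr (h i)
  obtain ⟨C, hC⟩ := (Set.finite_range n).bddAbove
  exact ⟨C, fun i => (hn i).mono (hC ⟨i, rfl⟩)⟩

theorem list_bound {ι : Type} [Finite ι] (f g : ι → F4) (h : ∀ i, pr (f i) = pr (g i)) :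
    ∃ C, ∀ l : List ι, E (C * l.length) (l.map f).prod (l.map g).prod := by
  obtain ⟨C, hC⟩ := fin_bound f g h
  refine ⟨C, fun l => ?_⟩
  induction l with
  | nil => simpa using E.refl 1
  | cons x l ih =>
    simp only [List.map_cons, List.prod_cons, List.length_cons]
    exact ((hC x).mul ih).mono (by rw [mul_add]; omega)

/-! ### relations in the quotient -/

abbrev A : GG := pr ga
abbrev B : GG := pr gb
abbrev C : GG := pr gc
abbrev D : GG := pr gd

theorem AA : A * A = 1 := by
  rw [← map_mul, pr_eq_one, ← pow_two]; exact Subgroup.subset_normalClosure (by simp [Rinf])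
theorem BB : B * B = 1 := by
  rw [← map_mul, pr_eq_one, ← pow_two]; exact Subgroup.subset_normalClosure (by simp [Rinf])
theorem CC : C * C = 1 := by
  rw [← map_mul, pr_eq_one, ← pow_two]; exact Subgroup.subset_normalClosure (by simp [Rinf])
theorem DD : D * D = 1 := by
  rw [← map_mul, pr_eq_one, ← pow_two]; exact Subgroup.subset_normalClosure (by simp [Rinf])
theorem BCD : B * C * D = 1 := by
  rw [← map_mul, ← map_mul, pr_eq_one]; exact Subgroup.subset_normalClosure (by simp [Rinf])
theorem AD4 : (A * D) ^ 4 = 1 := by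
  rw [← map_mul, ← map_pow, pr_eq_one]
  exact Subgroup.subset_normalClosure (Or.inl (Or.inr ⟨0, rfl⟩))
theorem AC4 : (A * C * A * C) ^ 4 = 1 := by
  simp only [← map_mul, ← map_pow]
  rw [pr_eq_one]
  exact Subgroup.subset_normalClosure (Or.inl (Or.inr ⟨1, by
    simp only [Function.iterate_one, map_pow, map_mul, sigma_a, sigma_d]⟩))
theorem ADACAC4 : (A * D * A * C * A * C) ^ 4 = 1 := by
  simp only [← map_mul, ← map_pow]
  rw [pr_eq_one]
  exact Subgroup.subset_normalClosure (Or.inr ⟨0, rfl⟩)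

theorem Ai : A⁻¹ = A := inv_eq_of_mul_eq_one_left AA
theorem Bi : B⁻¹ = B := inv_eq_of_mul_eq_one_left BB
theorem Ci : C⁻¹ = C := inv_eq_of_mul_eq_one_left CC
theorem Di : D⁻¹ = D := inv_eq_of_mul_eq_one_left DD
theorem B_eq : B = D * C := by
  have h := BCD
  have h1 : B = D⁻¹ * C⁻¹ := by
    rw [← mul_inv_rev]; exact eq_inv_of_mul_eq_one_left (by rw [← mul_assoc]; exact h)
  rwa [Ci, Di] at h1
theorem DC : D * C = C * D := by
  have h := Bi
  rw [B_eq, mul_inv_rev, Ci, Di] at h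
  exact h.symm
theorem B_eq' : B = C * D := by rw [B_eq, DC]
theorem AA' (x : GG) : A * (A * x) = x := by rw [← mul_assoc, AA, one_mul]
theorem CC' (x : GG) : C * (C * x) = x := by rw [← mul_assoc, CC, one_mul]
theorem DD' (x : GG) : D * (D * x) = x := by rw [← mul_assoc, DD, one_mul]
theorem DC' (x : GG) : D * (C * x) = C * (D * x) := by rw [← mul_assoc, DC, mul_assoc]

set_option linter.unusedSimpArgs false
/-! ### the dihedral part -/

abbrev Dl : Type := Bool × Fin 4

def dv (δ : Dl) : F4 := (if δ.1 then gc else 1) * (gc * (ga * gc * ga)) ^ (δ.2 : ℕ)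

theorem comm_aux {G : Type*} [Group G] (c c' d d' : G) (hc : c * c = 1) (hc' : c' * c' = 1)
    (hcd : c * d = d * c) (hcd' : c' * d' = d' * c') (h4 : (c * c') ^ 4 = 1)
    (h1 : Commute d d') (h2 : Commute d (c' * c * d' * c * c')) (e : Bool) (k : Fin 4) :
    Commute d (((if e then c else 1) * (c * c') ^ (k : ℕ))⁻¹ * d' *
      ((if e then c else 1) * (c * c') ^ (k : ℕ))) := by
  have ci : c⁻¹ = c := inv_eq_of_mul_eq_one_left hc
  have ci' : c'⁻¹ = c' := inv_eq_of_mul_eq_one_left hc'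
  have hcx : ∀ x, c * (c * x) = x := fun x => by rw [← mul_assoc, hc, one_mul]
  have hcx' : ∀ x, c' * (c' * x) = x := fun x => by rw [← mul_assoc, hc', one_mul]
  have hcdx' : ∀ x, c' * (d' * x) = d' * (c' * x) := fun x => by
    rw [← mul_assoc, hcd', mul_assoc]
  have hC : Commute d c := hcd.symm
  have u2 : (c * c') ^ 2 = c' * c * c' * c := by
    have : (c * c') ^ 2 = ((c * c') ^ 2)⁻¹ := by
      apply eq_inv_of_mul_eq_one_left
      rw [← pow_add]; exact h4
    rw [this, pow_two]; simp [ci, ci', mul_assoc]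
  have u3 : (c * c') ^ 3 = c' * c := by
    have : (c * c') ^ 3 = (c * c')⁻¹ := by
      apply eq_inv_of_mul_eq_one_left
      rw [← pow_succ]; exact h4
    rw [this]; simp [ci, ci']
  have key : ∀ t, (t = 1 ∨ t = c ∨ t = c * c' ∨ t = c' ∨ t = c' * c * c' * c ∨ t = c' * c * c'
      ∨ t = c' * c ∨ t = c * c' * c) → Commute d (t⁻¹ * d' * t) := by
    have h3 : Commute d (c * d' * c) := (hC.mul_right h1).mul_right hC
    have h5 : Commute d (c * (c' * c * d' * c * c') * c) := (hC.mul_right h2).mul_right hC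
    simp only [mul_assoc] at h2 h3 h5
    rintro t (rfl | rfl | rfl | rfl | rfl | rfl | rfl | rfl) <;>
      simp only [mul_inv_rev, ci, ci', mul_assoc, inv_one, one_mul, mul_one, hcx, hcx', hc, hc',
        hcdx', hcd'] <;> assumption
  apply key
  have u2s : c * (c' * (c * (c' * c))) = c' * (c * c') := by
    have := congrArg (fun x => c * x) u2
    simp only [pow_two, mul_assoc, hcx] at this
    exact this.symm
  fin_cases k <;> cases e <;> simp [u2, u3, u2s, mul_assoc, hcx]

abbrev C' : GG := A * C * A
abbrev D' : GG := A * D * A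

theorem C'C' : C' * C' = 1 := by simp only [mul_assoc, AA', CC', AA]
theorem D'D' : D' * D' = 1 := by simp only [mul_assoc, AA', DD', AA]
theorem C'D' : C' * D' = D' * C' := by simp only [mul_assoc, AA', DC']
theorem U4 : (C * C') ^ 4 = 1 := by
  have h : C * C' = A * (A * C * A * C) * A⁻¹ := by
    rw [Ai]; simp only [mul_assoc, AA']
  rw [h, conj_pow, AC4]; simp
theorem comm1 : Commute D D' := by
  have h := AD4
  have h2 : (D * D') * (D * D') = 1 := by
    have : (D * D') * (D * D') = A⁻¹ * (A * D) ^ 4 * A⁻¹⁻¹ := by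
      simp only [Ai, pow_succ, pow_zero, mul_assoc, AA', one_mul]
    rw [this, h]; simp
  have h3 := eq_inv_of_mul_eq_one_left h2
  rw [mul_inv_rev, Di, inv_eq_of_mul_eq_one_left D'D'] at h3
  exact h3
theorem comm2 : Commute D (C' * C * D' * C * C') := by
  have h := ADACAC4
  set Z := C' * C * D' * C * C' with hZ
  have hZZ : Z * Z = 1 := by simp only [hZ, mul_assoc, AA', CC', DD', AA]
  have h2 : (D * Z) * (D * Z) = 1 := by
    have : (D * Z) * (D * Z) = A⁻¹ * (A * D * A * C * A * C) ^ 4 * A⁻¹⁻¹ := by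
      simp only [hZ, Ai, pow_succ, pow_zero, mul_assoc, AA', CC', one_mul]
    rw [this, h]; simp
  have h3 := eq_inv_of_mul_eq_one_left h2
  rw [mul_inv_rev, Di, inv_eq_of_mul_eq_one_left hZZ] at h3
  exact h3

theorem pr_dv (δ : Dl) : pr (dv δ) = (if δ.1 then C else 1) * (C * C') ^ (δ.2 : ℕ) := by
  rcases δ with ⟨e, k⟩
  cases e <;> simp only [dv, map_mul, map_pow, if_true, Bool.false_eq_true, if_false, map_one]

theorem step_c (δ : Dl) : ∃ δ', C * pr (dv δ) = pr (dv δ') := by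
  rcases δ with ⟨e, k⟩
  refine ⟨(!e, k), ?_⟩
  rw [pr_dv, pr_dv]
  cases e
  · simp
  · simp only [if_true, Bool.not_true, CC']; simp

theorem step_c' (δ : Dl) : ∃ δ', C' * pr (dv δ) = pr (dv δ') := by
  rcases δ with ⟨e, k⟩
  cases e
  · refine ⟨(true, k + 1), ?_⟩
    rw [pr_dv, pr_dv]
    simp only [Bool.false_eq_true, if_false, if_true, one_mul]
    rw [Fin.val_add, ← pow_eq_pow_mod _ U4, add_comm (k : ℕ), pow_add]
    simp only [Fin.val_one, pow_one, mul_assoc, CC']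
  · refine ⟨(false, k + 3), ?_⟩
    rw [pr_dv, pr_dv]
    simp only [Bool.false_eq_true, if_false, if_true, one_mul]
    rw [Fin.val_add, ← pow_eq_pow_mod _ U4, add_comm (k : ℕ), pow_add]
    have : (C * C') ^ ((3 : Fin 4) : ℕ) = C' * C := by
      have : (C * C') ^ 3 = (C * C')⁻¹ := by
        apply eq_inv_of_mul_eq_one_left
        rw [← pow_succ]; exact U4
      rw [show ((3 : Fin 4) : ℕ) = 3 from rfl, this, mul_inv_rev, Ci,
        inv_eq_of_mul_eq_one_left C'C']
    rw [this]; simp only [mul_assoc]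

def ZZ : Subgroup GG := Subgroup.closure {C, C'}

theorem dv_mem (δ : Dl) : pr (dv δ) ∈ ZZ := by
  have h1 : C ∈ ZZ := Subgroup.subset_closure (by simp)
  have h2 : C' ∈ ZZ := Subgroup.subset_closure (by simp)
  rw [pr_dv]
  apply mul_mem
  · split_ifs
    · exact h1
    · exact one_mem _
  · exact pow_mem (mul_mem h1 h2) _

theorem mem_dv {z : GG} (hz : z ∈ ZZ) : ∃ δ, z = pr (dv δ) := by
  induction hz using Subgroup.closure_induction_left with
  | one => exact ⟨(false, 0), by rw [pr_dv]; simp⟩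
  | mul_left x hx y hy ih =>
    obtain ⟨δ, rfl⟩ := ih
    rcases hx with rfl | rfl
    · exact step_c δ
    · exact step_c' δ
  | inv_mul_cancel x hx y hy ih =>
    obtain ⟨δ, rfl⟩ := ih
    rcases hx with rfl | rfl
    · rw [Ci]; exact step_c δ
    · rw [inv_eq_of_mul_eq_one_left C'C']; exact step_c' δ

def xv (δ : Dl) : F4 := (dv δ)⁻¹ * gd * dv δ
def yv (δ : Dl) : F4 := (dv δ)⁻¹ * (ga * gd * ga) * dv δ

theorem xy_comm (δ δ' : Dl) : pr (xv δ * yv δ') = pr (yv δ' * xv δ) := by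
  obtain ⟨η, hη⟩ := mem_dv (mul_mem (dv_mem δ') (inv_mem (dv_mem δ)))
  have h := comm_aux C C' D D' CC C'C' DC.symm C'D' U4 comm1 comm2 η.1 η.2
  rw [← pr_dv, ← hη] at h
  set z := pr (dv δ)
  set z' := pr (dv δ')
  have h2 : Commute (z⁻¹ * D * z) (z'⁻¹ * D' * z') := by
    have h3 := congrArg (fun x => z⁻¹ * x * z) h.eq
    simp only [Commute, SemiconjBy]
    calc _ = z⁻¹ * (D * ((z' * z⁻¹)⁻¹ * D' * (z' * z⁻¹))) * z := by group
      _ = _ := h3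
      _ = _ := by group
  simp only [xv, yv, map_mul, map_inv]
  exact h2.eq

abbrev TT : Type := Bool × Bool

def te (t : TT) : F4 :=
  match t with
  | (false, false) => gc
  | (false, true) => ga * gc * ga
  | (true, false) => gd
  | (true, true) => ga * gd * ga

def te0 (t : TT) : F4 :=
  match t with
  | (false, false) => gc
  | (false, true) => ga * gc * ga
  | (true, false) => 1
  | (true, true) => ga * gd * ga

def te1 (t : TT) : F4 :=
  match t with
  | (false, false) => gc
  | (false, true) => ga * gc * ga
  | (true, false) => gd
  | (true, true) => 1

theorem move {K : ℕ} (hK : ∀ i : Dl × Dl, E K (xv i.1 * yv i.2) (yv i.2 * xv i.1)) (δ : Dl)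
    (Y : List Dl) : E (K * Y.length) (xv δ * (Y.map yv).prod) ((Y.map yv).prod * xv δ) := by
  induction Y with
  | nil => simpa using E.refl (xv δ)
  | cons y Y ih =>
    simp only [List.map_cons, List.prod_cons, List.length_cons]
    have h1 := (hK (δ, y)).right (Y.map yv).prod
    have h2 := ih.left (yv y)
    simp only [← mul_assoc] at h1 h2 ⊢
    exact (h1.trans h2).mono (by rw [mul_add]; omega)

theorem quad : ∃ K, ∀ t : List TT, ∃ δ : Dl, ∃ Y X : List Dl,
    Y.length ≤ t.length ∧
    E (K * (t.length * t.length)) (t.map te).prod (dv δ * (Y.map yv).prod * (X.map xv).prod) ∧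
    E (K * t.length) (t.map te0).prod (dv δ * (Y.map yv).prod) ∧
    E (K * t.length) (t.map te1).prod (dv δ * (X.map xv).prod) := by
  choose f hf using step_c
  choose g hg using step_c'
  obtain ⟨K1, hK1⟩ := fin_bound (fun δ => gc * dv δ) (fun δ => dv (f δ)) (by
    intro δ; rw [map_mul]; exact hf δ)
  obtain ⟨K2, hK2⟩ := fin_bound (fun δ => ga * gc * ga * dv δ) (fun δ => dv (g δ)) (by
    intro δ; simp only [map_mul]; exact hg δ)
  obtain ⟨K3, hK3⟩ := fin_bound (fun i : Dl × Dl => xv i.1 * yv i.2) (fun i => yv i.2 * xv i.1)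
    (fun i => xy_comm i.1 i.2)
  have key : ∀ n : ℕ, (K1 + K2 + K3) * ((n + 1) * (n + 1)) =
      (K1 + K2 + K3) * (n * n) + (K1 + K2 + K3) * n + (K1 + K2 + K3) * n + (K1 + K2 + K3) := by
    intro n; ring
  have key2 : ∀ n : ℕ, (K1 + K2 + K3) * (n + 1) = (K1 + K2 + K3) * n + (K1 + K2 + K3) := by
    intro n; ring
  refine ⟨K1 + K2 + K3, fun t => ?_⟩
  induction t with
  | nil =>
    refine ⟨(false, 0), [], [], by simp, ?_⟩
    simpa [dv] using E.refl 1
  | cons x t ih =>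
    obtain ⟨δ, Y, X, hY, h, h0, h1⟩ := ih
    simp only [List.map_cons, List.prod_cons, List.length_cons, key, key2]
    have e1 : gd * dv δ = dv δ * xv δ := by simp only [xv]; group
    have e2 : (ga * gd * ga) * dv δ = dv δ * yv δ := by simp only [yv]; group
    rcases x with ⟨_ | _, _ | _⟩
    · refine ⟨f δ, Y, X, by omega, ?_, ?_, ?_⟩
      · have a1 := h.left gc
        have a2 := (hK1 δ).right ((Y.map yv).prod * (X.map xv).prod)
        simp only [← mul_assoc, te] at a1 a2 ⊢
        exact (a1.trans a2).mono (by omega)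
      · have a1 := h0.left gc
        have a2 := (hK1 δ).right ((Y.map yv).prod)
        simp only [← mul_assoc, te0] at a1 a2 ⊢
        exact (a1.trans a2).mono (by omega)
      · have a1 := h1.left gc
        have a2 := (hK1 δ).right ((X.map xv).prod)
        simp only [← mul_assoc, te1] at a1 a2 ⊢
        exact (a1.trans a2).mono (by omega)
    · refine ⟨g δ, Y, X, by omega, ?_, ?_, ?_⟩
      · have a1 := h.left (ga * gc * ga)
        have a2 := (hK2 δ).right ((Y.map yv).prod * (X.map xv).prod)
        simp only [← mul_assoc, te] at a1 a2 ⊢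
        exact (a1.trans a2).mono (by omega)
      · have a1 := h0.left (ga * gc * ga)
        have a2 := (hK2 δ).right ((Y.map yv).prod)
        simp only [← mul_assoc, te0] at a1 a2 ⊢
        exact (a1.trans a2).mono (by omega)
      · have a1 := h1.left (ga * gc * ga)
        have a2 := (hK2 δ).right ((X.map xv).prod)
        simp only [← mul_assoc, te1] at a1 a2 ⊢
        exact (a1.trans a2).mono (by omega)
    · refine ⟨δ, Y, δ :: X, by omega, ?_, ?_, ?_⟩
      · have a1 := h.left gd
        have a2 := ((move hK3 δ Y).left (dv δ)).right (X.map xv).prod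
        simp only [← mul_assoc, te, e1, List.map_cons, List.prod_cons] at a1 a2 ⊢
        have hle : K3 * Y.length ≤ (K1 + K2 + K3) * t.length :=
          Nat.mul_le_mul (by omega) hY
        exact (a1.trans a2).mono (by omega)
      · simp only [te0, one_mul]
        exact h0.mono (by omega)
      · have a1 := h1.left gd
        simp only [← mul_assoc, te1, e1, List.map_cons, List.prod_cons] at a1 ⊢
        exact a1.mono (by omega)
    · refine ⟨δ, δ :: Y, X, by simpa using hY, ?_, ?_, ?_⟩
      · have a1 := h.left (ga * gd * ga)
        rw [← mul_assoc (ga * gd * ga), ← mul_assoc (ga * gd * ga), e2] at a1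
        simp only [← mul_assoc, te, List.map_cons, List.prod_cons] at a1 ⊢
        exact a1.mono (by omega)
      · have a1 := h0.left (ga * gd * ga)
        rw [← mul_assoc (ga * gd * ga), e2] at a1
        simp only [← mul_assoc, te0, List.map_cons, List.prod_cons] at a1 ⊢
        exact a1.mono (by omega)
      · simp only [te1, one_mul]
        exact h1.mono (by omega)

theorem quad' : ∃ K, ∀ (t : List TT) (p q p' q' : ℕ), (t.map te).prod ∈ NN →
    Ar p q (t.map te0).prod → Ar p' q' (t.map te1).prod →
    Ar (p + p' + K * ((t.length + 1) * (t.length + 1)))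
      (q + q' + K * ((t.length + 1) * (t.length + 1))) (t.map te).prod := by
  obtain ⟨K, hK⟩ := quad
  obtain ⟨K', hK'⟩ := fin_bound (fun δ : {δ : Dl // pr (dv δ) = 1} => dv δ.1) (fun _ => 1)
    (fun δ => by rw [δ.2, map_one])
  refine ⟨3 * K + K', fun t p q p' q' ht h0 h1 => ?_⟩
  obtain ⟨δ, Y, X, hY, e, e0, e1⟩ := hK t
  have hx : dv δ * (Y.map yv).prod * (X.map xv).prod =
    (dv δ * (Y.map yv).prod) * ((dv δ)⁻¹ * (dv δ * (X.map xv).prod)) := by group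
  rw [hx] at e
  have hδ : pr (dv δ) = 1 := by
    have h2 := e.pr
    rw [pr_eq_one.2 ht, map_mul, ← e0.pr, pr_eq_one.2 h0.mem, map_mul, ← e1.pr,
      pr_eq_one.2 h1.mem, map_inv] at h2
    simpa using h2.symm
  have hδ' : Ar K' K' (dv δ)⁻¹ := by
    have := hK' ⟨δ, hδ⟩
    simp only [E, inv_one, mul_one] at this
    exact this.inv
  have r := e.ar ((e0.symm.ar h0).mul (hδ'.mul (e1.symm.ar h1)))
  have k1 : (3 * K + K') * ((t.length + 1) * (t.length + 1)) = 3 * (K * (t.length * t.length)) +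
    6 * (K * t.length) + 3 * K + K' * (t.length * t.length + 2 * t.length) + K' := by ring
  rw [k1]
  exact r.mono (by omega) (by omega)

/-! ### words -/

abbrev KK : Type := Bool × Bool

def kv (x : KK) : F4 := (if x.1 then gc else 1) * (if x.2 then gd else 1)
def kap (x : KK) : KK := (x.2, xor x.1 x.2)
def aw (b : Bool) : F4 := if b then ga else 1
def hv (i : KK × KK) : F4 := kv i.1 * (ga * kv i.2 * ga)
def tl (i : KK × KK) : List TT :=
  (if i.1.1 then [(false, false)] else []) ++ (if i.1.2 then [(true, false)] else []) ++
  (if i.2.1 then [(false, true)] else []) ++ (if i.2.2 then [(true, true)] else [])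
abbrev MM : Type := KK × Bool × KK
def mv (m : MM) : F4 := kv m.1 * aw m.2.1 * kv m.2.2
def m1 (i : KK × KK) : MM := (kap i.1, i.2.1, (false, false))
def m0 (i : KK × KK) : MM := ((false, false), i.1.1, kap i.2)

theorem tl_len (i : KK × KK) : (tl i).length ≤ 4 := by
  rcases i with ⟨⟨_ | _, _ | _⟩, ⟨_ | _, _ | _⟩⟩ <;> simp [tl]

theorem tl_te (i : KK × KK) : pr (hv i) = pr ((tl i).map te).prod := by
  rcases i with ⟨⟨_ | _, _ | _⟩, ⟨_ | _, _ | _⟩⟩ <;>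
  simp only [hv, tl, kv, te, if_true, Bool.false_eq_true, if_false, map_one, map_mul, List.append_nil,
    List.nil_append, List.cons_append, List.map_cons, List.map_nil, List.prod_cons, List.prod_nil,
    mul_one, one_mul, mul_assoc, AA, AA']

theorem tl_te1 (i : KK × KK) : pr (sigma (mv (m1 i))) = pr ((tl i).map te1).prod := by
  rcases i with ⟨⟨_ | _, _ | _⟩, ⟨_ | _, _ | _⟩⟩ <;>
  simp only [mv, m1, tl, kv, kap, aw, te1, if_true, Bool.false_eq_true, if_false, map_one, map_mul,
    Bool.xor_false, Bool.xor_true, Bool.not_true, Bool.not_false, List.append_nil,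
    List.nil_append, List.cons_append, List.map_cons, List.map_nil, List.prod_cons, List.prod_nil,
    mul_one, one_mul, mul_assoc, AA, AA', sigma_a, sigma_b, sigma_c, sigma_d, B_eq', DC, DC',
    CC, CC', DD, DD']

def cs : F4 →* F4 := (MulAut.conj ga).toMonoidHom.comp sigma
theorem cs_apply (w : F4) : cs w = ga * sigma w * ga⁻¹ := rfl

theorem tl_te0 (i : KK × KK) : pr (cs (mv (m0 i))) = pr ((tl i).map te0).prod := by
  rcases i with ⟨⟨_ | _, _ | _⟩, ⟨_ | _, _ | _⟩⟩ <;>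
  simp only [mv, m0, tl, kv, kap, aw, te0, if_true, Bool.false_eq_true, if_false, map_one, map_mul,
    Bool.xor_false, Bool.xor_true, Bool.not_true, Bool.not_false, List.append_nil,
    List.nil_append, List.cons_append, List.map_cons, List.map_nil, List.prod_cons, List.prod_nil,
    mul_one, one_mul, mul_assoc, AA, AA', sigma_a, sigma_b, sigma_c, sigma_d, B_eq', DC, DC',
    CC, CC', DD, DD', cs_apply, map_inv, Ai]

/-! ### parity -/

def par : F4 →* ℤˣ := FreeGroup.lift fun x => match x with
  | L4.a => -1
  | L4.b => 1
  | L4.c => 1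
  | L4.d => 1

theorem par_a : par ga = -1 := by simp [par, ga]
theorem par_b : par gb = 1 := by simp [par, gb]
theorem par_c : par gc = 1 := by simp [par, gc]
theorem par_d : par gd = 1 := by simp [par, gd]

theorem iter_pow (i : ℕ) (u : F4) : (⇑sigma)^[i] (u ^ 4) = ((⇑sigma)^[i] u) ^ 4 :=
  iterate_map_pow sigma i u 4

theorem pow4_units (x : ℤˣ) : x ^ 4 = 1 := by
  rcases Int.units_eq_one_or x with rfl | rfl <;> rfl

theorem par_NN {w : F4} (h : w ∈ NN) : par w = 1 := by
  have : NN ≤ par.ker := Subgroup.normalClosure_le_normal (by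
    intro r hr
    simp only [Rinf, Set.mem_union, Set.mem_insert_iff, Set.mem_singleton_iff,
      Set.mem_ofPred_eq] at hr
    show par r = 1
    rcases hr with ((rfl | rfl | rfl | rfl | rfl) | ⟨i, rfl⟩) | ⟨i, rfl⟩
    · simp [par_a]
    · simp [par_b]
    · simp [par_c]
    · simp [par_d]
    · simp [par_b, par_c, par_d]
    · rw [iter_pow, map_pow, pow4_units]
    · rw [iter_pow, map_pow, pow4_units])
  exact this h

def avw : KK → List KK → F4
  | x, [] => kv x
  | x, y :: l => kv x * ga * avw y l

theorem par_kv (x : KK) : par (kv x) = 1 := by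
  rcases x with ⟨_ | _, _ | _⟩ <;> simp [kv, par_c, par_d]

theorem par_avw (x : KK) (l : List KK) : par (avw x l) = (-1) ^ l.length := by
  induction l generalizing x with
  | nil => simp [avw, par_kv]
  | cons y l ih => simp [avw, par_kv, par_a, ih, pow_succ]

def atail : List KK → F4
  | [] => 1
  | y :: l => ga * avw y l

theorem avw_eq (x : KK) (l : List KK) : avw x l = kv x * atail l := by
  cases l <;> simp [avw, atail, mul_assoc]

def km (x y : KK) : KK := (xor x.1 y.1, xor x.2 y.2)

theorem km_pr (x y : KK) : pr (kv x * kv y) = pr (kv (km x y)) := by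
  rcases x with ⟨_ | _, _ | _⟩ <;> rcases y with ⟨_ | _, _ | _⟩ <;>
  simp only [kv, km, if_true, Bool.false_eq_true, if_false, map_one, map_mul,
    Bool.xor_false, Bool.xor_true, Bool.not_true, Bool.not_false,
    mul_one, one_mul, mul_assoc, DC, DC', CC, CC', DD, DD']

theorem toAlt : ∃ K, ∀ m : List MM, ∃ x l, l.length ≤ m.length ∧
    E (K * m.length) (m.map mv).prod (avw x l) := by
  obtain ⟨K, hK⟩ := fin_bound (fun i : KK × KK => kv i.1 * kv i.2) (fun i => kv (km i.1 i.2))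
    (fun i => km_pr i.1 i.2)
  refine ⟨2 * K, fun m => ?_⟩
  induction m with
  | nil => exact ⟨(false, false), [], by simp, by simpa [avw, kv] using E.refl 1⟩
  | cons z m ih =>
    obtain ⟨x0, l, hl, h⟩ := ih
    obtain ⟨x, b, y⟩ := z
    have h1 : E K (kv y * avw x0 l) (avw (km y x0) l) := by
      rw [avw_eq, avw_eq, ← mul_assoc]
      exact (hK (y, x0)).right _
    have h2 : E (2 * K * m.length + K) (kv y * (m.map mv).prod) (avw (km y x0) l) :=
      (h.left _).trans h1
    simp only [List.map_cons, List.prod_cons, List.length_cons]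
    cases b
    · refine ⟨km x (km y x0), l, by omega, ?_⟩
      have h3 : E K (kv x * avw (km y x0) l) (avw (km x (km y x0)) l) := by
        rw [avw_eq, avw_eq, ← mul_assoc]
        exact (hK (x, _)).right _
      have h4 := (h2.left (kv x)).trans h3
      simp only [mv, aw, Bool.false_eq_true, if_false, mul_one, mul_assoc] at h4 ⊢
      refine h4.mono ?_
      linarith
    · refine ⟨x, km y x0 :: l, by simpa using hl, ?_⟩
      have h4 := h2.left (kv x * ga)
      simp only [mv, aw, if_true, avw, mul_assoc] at h4 ⊢
      refine h4.mono ?_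
      linarith

theorem toH : ∃ K, ∀ (n : ℕ) (x : KK) (l : List KK), l.length = 2 * n →
    ∃ h : List (KK × KK), h.length = n + 1 ∧ E K (avw x l) (h.map hv).prod := by
  obtain ⟨K, hK⟩ := fin_bound (fun x : KK => kv x) (fun x => hv (x, (false, false))) (by
    intro x
    simp only [hv, kv, Bool.false_eq_true, if_false, mul_one, map_mul, AA])
  refine ⟨K, fun n => ?_⟩
  induction n with
  | zero =>
    intro x l hl
    have : l = [] := List.length_eq_zero_iff.1 (by omega)
    subst this
    exact ⟨[(x, (false, false))], by simp, by simpa [avw] using hK x⟩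
  | succ n ih =>
    intro x l hl
    match l, hl with
    | y :: z :: l, hl =>
      obtain ⟨h, h1, h2⟩ := ih z l (by simp at hl; omega)
      refine ⟨(x, y) :: h, by simp [h1], ?_⟩
      have h3 := h2.left (kv x * ga * kv y * ga)
      simpa only [avw, List.map_cons, List.prod_cons, hv, mul_assoc] using h3

theorem conv : ∃ K, ∀ m : List MM, (m.map mv).prod ∈ NN → ∃ h : List (KK × KK),
    h.length ≤ m.length / 2 + 1 ∧ E (K * (m.length + 1)) (m.map mv).prod (h.map hv).prod := by
  obtain ⟨K1, h1⟩ := toAlt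
  obtain ⟨K2, h2⟩ := toH
  refine ⟨K1 + K2, fun m hm => ?_⟩
  obtain ⟨x, l, hl, e⟩ := h1 m
  have hmem : avw x l ∈ NN := by
    rw [← pr_eq_one, ← e.pr, pr_eq_one]; exact hm
  have hp := par_NN hmem
  rw [par_avw] at hp
  have hev : Even l.length := by
    by_contra hodd
    rw [Nat.not_even_iff_odd] at hodd
    rw [hodd.neg_one_pow] at hp
    exact absurd hp (by decide)
  obtain ⟨n, hn⟩ := hev
  obtain ⟨h, hh, e2⟩ := h2 n x l (by omega)
  refine ⟨h, by omega, (e.trans e2).mono ?_⟩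
  have : (K1 + K2) * (m.length + 1) = K1 * m.length + K2 + K1 + K2 * m.length := by ring
  omega

/-! ### the wreath recursion -/

def dg : GG × GG →* Equiv.Perm (Bool × GG) where
  toFun p :=
    { toFun := fun x => (x.1, (if x.1 then p.2 else p.1) * x.2)
      invFun := fun x => (x.1, (if x.1 then p.2 else p.1)⁻¹ * x.2)
      left_inv := by rintro ⟨_ | _, g⟩ <;> simp
      right_inv := by rintro ⟨_ | _, g⟩ <;> simp }
  map_one' := by ext ⟨_ | _, g⟩ <;> simp
  map_mul' p q := by
    apply Equiv.ext
    rintro ⟨_ | _, g⟩ <;> simp [mul_assoc]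

def sw : Equiv.Perm (Bool × GG) where
  toFun x := (!x.1, x.2)
  invFun x := (!x.1, x.2)
  left_inv := by rintro ⟨_ | _, g⟩ <;> simp
  right_inv := by rintro ⟨_ | _, g⟩ <;> simp

theorem sw_sw : sw * sw = 1 := by
  apply Equiv.ext; rintro ⟨_ | _, g⟩ <;> simp [sw]
theorem sw_sw' (x : Equiv.Perm (Bool × GG)) : sw * (sw * x) = x := by
  rw [← mul_assoc, sw_sw, one_mul]
theorem dg_sw (x y : GG) : dg (x, y) * sw = sw * dg (y, x) := by
  apply Equiv.ext; rintro ⟨_ | _, g⟩ <;> simp [sw, dg]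
theorem dg_sw' (x y : GG) (z : Equiv.Perm (Bool × GG)) :
    dg (x, y) * (sw * z) = sw * (dg (y, x) * z) := by
  rw [← mul_assoc, dg_sw, mul_assoc]
theorem dg_dg (x y x' y' : GG) : dg (x, y) * dg (x', y') = dg (x * x', y * y') := by
  rw [← map_mul]; rfl
theorem dg_dg' (x y x' y' : GG) (z : Equiv.Perm (Bool × GG)) :
    dg (x, y) * (dg (x', y') * z) = dg (x * x', y * y') * z := by
  rw [← mul_assoc, dg_dg]
theorem dg_one : dg (1, 1) = 1 := map_one dg

theorem dg_inj {x y : GG} (h : dg (x, y) = 1) : x = 1 ∧ y = 1 := by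
  have h1 := congrArg (fun f => f (false, 1)) h
  have h2 := congrArg (fun f => f (true, 1)) h
  simp [dg] at h1 h2
  exact ⟨h1, h2⟩

def psi : F4 →* Equiv.Perm (Bool × GG) := FreeGroup.lift fun x => match x with
  | L4.a => sw
  | L4.b => dg (A, C)
  | L4.c => dg (A, D)
  | L4.d => dg (1, B)

theorem psi_a : psi ga = sw := by simp only [psi, ga, FreeGroup.lift_apply_of]
theorem psi_b : psi gb = dg (A, C) := by simp only [psi, gb, FreeGroup.lift_apply_of]
theorem psi_c : psi gc = dg (A, D) := by simp only [psi, gc, FreeGroup.lift_apply_of]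
theorem psi_d : psi gd = dg (1, B) := by simp only [psi, gd, FreeGroup.lift_apply_of]

def theta : F4 →* GG := FreeGroup.lift fun x => match x with
  | L4.a => D
  | L4.b => 1
  | L4.c => A
  | L4.d => A

theorem theta_form (w : F4) : ∃ k : ℤ, theta w = (A * D) ^ k ∨ theta w = A * (A * D) ^ k := by
  have hA : ∀ g : GG, (∃ k : ℤ, g = (A * D) ^ k ∨ g = A * (A * D) ^ k) →
      ∃ k : ℤ, A * g = (A * D) ^ k ∨ A * g = A * (A * D) ^ k := by
    rintro g ⟨k, rfl | rfl⟩
    · exact ⟨k, Or.inr rfl⟩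
    · exact ⟨k, Or.inl (AA' _)⟩
  have hD : ∀ g : GG, (∃ k : ℤ, g = (A * D) ^ k ∨ g = A * (A * D) ^ k) →
      ∃ k : ℤ, D * g = (A * D) ^ k ∨ D * g = A * (A * D) ^ k := by
    rintro g ⟨k, rfl | rfl⟩
    · refine ⟨1 + k, Or.inr ?_⟩
      rw [zpow_add, zpow_one, mul_assoc, AA']
    · refine ⟨-1 + k, Or.inl ?_⟩
      rw [zpow_add, zpow_neg_one, mul_inv_rev, Ai, Di, mul_assoc]
  have key : ∀ (x : L4) (g : GG), (∃ k : ℤ, g = (A * D) ^ k ∨ g = A * (A * D) ^ k) →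
      (∃ k : ℤ, theta (FreeGroup.of x) * g = (A * D) ^ k ∨
        theta (FreeGroup.of x) * g = A * (A * D) ^ k) ∧
      (∃ k : ℤ, (theta (FreeGroup.of x))⁻¹ * g = (A * D) ^ k ∨
        (theta (FreeGroup.of x))⁻¹ * g = A * (A * D) ^ k) := by
    intro x g hg
    cases x <;> simp only [theta, FreeGroup.lift_apply_of]
    · rw [Di]; exact ⟨hD g hg, hD g hg⟩
    · rw [inv_one, one_mul]; exact ⟨hg, hg⟩
    · rw [Ai]; exact ⟨hA g hg, hA g hg⟩
    · rw [Ai]; exact ⟨hA g hg, hA g hg⟩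
  have gen : ∀ g : GG, (∃ k : ℤ, g = (A * D) ^ k ∨ g = A * (A * D) ^ k) →
      ∃ k : ℤ, theta w * g = (A * D) ^ k ∨ theta w * g = A * (A * D) ^ k := by
    induction w using FreeGroup.induction_on with
    | C1 => intro g hg; rw [map_one, one_mul]; exact hg
    | of x => intro g hg; exact (key x g hg).1
    | inv_of x _ => intro g hg; rw [map_inv]; exact (key x g hg).2
    | mul x y hx hy => intro g hg; rw [map_mul, mul_assoc]; exact hx _ (hy g hg)
  simpa only [mul_one] using gen 1 ⟨0, Or.inl (zpow_zero _).symm⟩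

theorem theta4 (w : F4) : theta w ^ 4 = 1 := by
  obtain ⟨k, h | h⟩ := theta_form w
  · rw [h, ← zpow_natCast, ← zpow_mul, mul_comm, zpow_mul, zpow_natCast, AD4, one_zpow]
  · have h1 : A * (A * D) * A⁻¹ = (A * D)⁻¹ := by
      rw [AA', mul_inv_rev, Di]
    have h2 : A * (A * D) ^ k * A⁻¹ = ((A * D) ^ k)⁻¹ := by
      rw [← conj_zpow, h1, inv_zpow]
    have h3 : (A * (A * D) ^ k) * (A * (A * D) ^ k) = 1 := by
      rw [Ai] at h2
      rw [← mul_assoc, h2, inv_mul_cancel]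
    have h5 : (A * (A * D) ^ k) ^ 2 = 1 := by rw [pow_two, h3]
    rw [h, show 4 = 2 * 2 from rfl, pow_mul, h5, one_pow]

theorem psi_sigma (w : F4) : psi (sigma w) = dg (theta w, pr w) := by
  have : psi.comp sigma = dg.comp (theta.prod pr) := by
    apply FreeGroup.ext_hom
    intro x
    cases x
    · show psi (sigma ga) = dg (theta ga, A)
      have : theta ga = D := by simp only [theta, ga, FreeGroup.lift_apply_of]
      rw [this, sigma_a]
      simp only [map_mul, psi_a, psi_c, mul_assoc, dg_sw, sw_sw']
    · show psi (sigma gb) = dg (theta gb, B)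
      have : theta gb = 1 := by simp only [theta, gb, FreeGroup.lift_apply_of]
      rw [this, sigma_b, psi_d]
    · show psi (sigma gc) = dg (theta gc, C)
      have : theta gc = A := by simp only [theta, gc, FreeGroup.lift_apply_of]
      rw [this, sigma_c, psi_b]
    · show psi (sigma gd) = dg (theta gd, D)
      have : theta gd = A := by simp only [theta, gd, FreeGroup.lift_apply_of]
      rw [this, sigma_d, psi_c]
  exact DFunLike.congr_fun this w

theorem psi_iter (u : F4) (h0 : psi (u ^ 4) = 1) (h : ∀ i, (⇑sigma)^[i] (u ^ 4) ∈ NN) (i : ℕ) :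
    psi ((⇑sigma)^[i] (u ^ 4)) = 1 := by
  cases i with
  | zero => exact h0
  | succ i =>
    rw [Function.iterate_succ_apply', psi_sigma, pr_eq_one.2 (h i), iter_pow, map_pow, theta4,
      dg_one]

theorem psi_NN {w : F4} (h : w ∈ NN) : psi w = 1 := by
  have : NN ≤ psi.ker := Subgroup.normalClosure_le_normal (by
    intro r hr
    simp only [Rinf, Set.mem_union, Set.mem_insert_iff, Set.mem_singleton_iff,
      Set.mem_ofPred_eq] at hr
    show psi r = 1
    rcases hr with ((rfl | rfl | rfl | rfl | rfl) | ⟨i, rfl⟩) | ⟨i, rfl⟩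
    · simp only [pow_two, map_mul, psi_a, sw_sw]
    · simp only [pow_two, map_mul, psi_b, dg_dg, AA, CC, dg_one]
    · simp only [pow_two, map_mul, psi_c, dg_dg, AA, DD, dg_one]
    · simp only [pow_two, map_mul, psi_d, dg_dg, BB, mul_one, dg_one]
    · simp only [map_mul, psi_b, psi_c, psi_d, dg_dg, mul_one, AA, B_eq', mul_assoc, DC', DC, CC',
        DD', DD, CC, dg_one]
    · refine psi_iter _ ?_ (fun i => Subgroup.subset_normalClosure (Or.inl (Or.inr ⟨i, rfl⟩))) i
      simp only [map_pow, map_mul, psi_a, psi_d, pow_succ, pow_zero, one_mul, mul_assoc, dg_sw',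
        sw_sw', dg_dg, dg_dg', mul_one, BB, dg_one, sw_sw, dg_sw]
    · refine psi_iter _ ?_ (fun i => Subgroup.subset_normalClosure (Or.inr ⟨i, rfl⟩)) i
      simp only [map_pow, map_mul, psi_a, psi_d, psi_c, pow_succ, pow_zero, one_mul, mul_assoc,
        dg_sw', sw_sw', dg_dg, dg_dg', mul_one, B_eq', dg_one, sw_sw, dg_sw, AA, AA', CC, CC',
        DD, DD', DC, DC'])
  exact this h

theorem psi_kv (x : KK) : psi (kv x) = dg (pr (aw x.1), pr (kv (kap x))) := by
  rcases x with ⟨_ | _, _ | _⟩ <;>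
  simp only [kv, kap, aw, if_true, Bool.false_eq_true, if_false, map_one, map_mul,
    Bool.xor_false, Bool.xor_true, Bool.not_true, Bool.not_false, psi_c, psi_d, dg_dg,
    mul_one, one_mul, mul_assoc, B_eq', DC, DC', CC, CC', DD, DD', dg_one]

theorem psi_hv (i : KK × KK) : psi (hv i) = dg (pr (mv (m0 i)), pr (mv (m1 i))) := by
  have h00 : kv (false, false) = 1 := by simp [kv]
  simp only [hv, mv, m0, m1, h00, one_mul, mul_one, map_mul, psi_kv, psi_a, mul_assoc, dg_sw,
    sw_sw', dg_dg]

theorem psi_list (h : List (KK × KK)) : psi (h.map hv).prod =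
    dg (pr ((h.map m0).map mv).prod, pr ((h.map m1).map mv).prod) := by
  induction h with
  | nil => simp only [List.map_nil, List.prod_nil, map_one, dg_one]
  | cons x h ih =>
    simp only [List.map_cons, List.prod_cons, map_mul] at ih ⊢
    rw [ih, psi_hv, dg_dg]

theorem components {h : List (KK × KK)} (hh : (h.map hv).prod ∈ NN) :
    ((h.map m0).map mv).prod ∈ NN ∧ ((h.map m1).map mv).prod ∈ NN := by
  have h1 := psi_NN hh
  rw [psi_list] at h1
  have h2 := dg_inj h1
  exact ⟨pr_eq_one.1 h2.1, pr_eq_one.1 h2.2⟩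

/-! ### recursion -/

theorem flat_prod (f : TT → F4) (h : List (KK × KK)) :
    ((h.flatMap tl).map f).prod = (h.map (fun i => ((tl i).map f).prod)).prod := by
  induction h with
  | nil => simp
  | cons x h ih => simp [ih]

theorem flat_len (h : List (KK × KK)) : (h.flatMap tl).length ≤ 4 * h.length := by
  induction h with
  | nil => simp
  | cons x h ih =>
    have := tl_len x
    simp only [List.flatMap_cons, List.length_append, List.length_cons]
    omega

theorem step : ∃ K, ∀ N P Q : ℕ,
    (∀ h : List (KK × KK), h.length ≤ N / 2 + 1 → (h.map hv).prod ∈ NN →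
      Ar P Q (h.map hv).prod) →
    ∀ h : List (KK × KK), h.length ≤ N → (h.map hv).prod ∈ NN →
      Ar (4 * P + K * ((N + 1) * (N + 1))) (2 * Q + 2 * P + K * ((N + 1) * (N + 1)))
        (h.map hv).prod := by
  obtain ⟨K0, hK0⟩ := conv
  obtain ⟨K1, hK1⟩ := list_bound _ _ tl_te
  obtain ⟨K2, hK2⟩ := list_bound _ _ tl_te1
  obtain ⟨K3, hK3⟩ := list_bound _ _ tl_te0
  obtain ⟨K4, hK4⟩ := quad'
  refine ⟨4 * K0 + K1 + K2 + K3 + 16 * K4, fun N P Q IH h hN hh => ?_⟩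
  obtain ⟨c0, c1⟩ := components hh
  have comp : ∀ f : KK × KK → MM, ((h.map f).map mv).prod ∈ NN →
      Ar (2 * P + 2 * (K0 * (N + 1))) (Q + P + 2 * (K0 * (N + 1)))
        (sigma ((h.map f).map mv).prod) := by
    intro f hf
    obtain ⟨h', hl, e⟩ := hK0 _ hf
    rw [List.length_map] at hl e
    have hm : (h'.map hv).prod ∈ NN := by
      rw [← pr_eq_one, ← e.pr, pr_eq_one]; exact hf
    have r := (e.ar (IH h' (by omega) hm)).sig
    have : K0 * (h.length + 1) ≤ K0 * (N + 1) := Nat.mul_le_mul le_rfl (by omega)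
    exact r.mono (by omega) (by omega)
  have e1 := (hK2 h).symm
  have e0 := (hK3 h).symm
  have e := hK1 h
  have s1 : (h.map (fun i => sigma (mv (m1 i)))).prod = sigma ((h.map m1).map mv).prod := by
    rw [map_list_prod]; simp only [List.map_map]; rfl
  have s0 : (h.map (fun i => cs (mv (m0 i)))).prod = cs ((h.map m0).map mv).prod := by
    rw [map_list_prod]; simp only [List.map_map]; rfl
  rw [s1, ← flat_prod] at e1
  rw [s0, ← flat_prod, cs_apply] at e0
  rw [← flat_prod] at e
  have a1 := e1.ar (comp m1 c1)
  have a0 := e0.ar ((comp m0 c0).conj ga)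
  have hmem : ((h.flatMap tl).map te).prod ∈ NN := by
    rw [← pr_eq_one, ← e.pr, pr_eq_one]; exact hh
  have r := e.ar (hK4 _ _ _ _ _ hmem a0 a1)
  have b4 : K4 * (((h.flatMap tl).length + 1) * ((h.flatMap tl).length + 1)) ≤
      16 * K4 * ((N + 1) * (N + 1)) := by
    have := flat_len h
    have h5 : (h.flatMap tl).length + 1 ≤ 4 * (N + 1) := by omega
    calc _ ≤ K4 * ((4 * (N + 1)) * (4 * (N + 1))) :=
          Nat.mul_le_mul le_rfl (Nat.mul_le_mul h5 h5)
      _ = _ := by ring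
  have lin : ∀ K n : ℕ, n ≤ N + 1 → K * n ≤ K * ((N + 1) * (N + 1)) := by
    intro K n hn
    exact Nat.mul_le_mul le_rfl (hn.trans (Nat.le_mul_of_pos_right _ (by omega)))
  have b0 := lin K0 (N + 1) le_rfl
  have b1 := lin K1 h.length (by omega)
  have b2 := lin K2 h.length (by omega)
  have b3 := lin K3 h.length (by omega)
  have ex : (4 * K0 + K1 + K2 + K3 + 16 * K4) * ((N + 1) * (N + 1)) =
    4 * (K0 * ((N + 1) * (N + 1))) + K1 * ((N + 1) * (N + 1)) + K2 * ((N + 1) * (N + 1)) +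
    K3 * ((N + 1) * (N + 1)) + 16 * K4 * ((N + 1) * (N + 1)) := by ring
  rw [ex]
  exact r.mono (by omega) (by omega)

theorem base : ∃ K, ∀ h : List (KK × KK), h.length ≤ 3 → (h.map hv).prod ∈ NN →
    Ar K K (h.map hv).prod := by
  have hf : Finite {h : List (KK × KK) // h.length ≤ 3 ∧ pr (h.map hv).prod = 1} := by
    have := List.finite_length_le (KK × KK) 3
    exact (this.subset (fun h hh => hh.1) :
      {h : List (KK × KK) | h.length ≤ 3 ∧ pr (h.map hv).prod = 1}.Finite)
  obtain ⟨K, hK⟩ := fin_bound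
    (fun h : {h : List (KK × KK) // h.length ≤ 3 ∧ pr (h.map hv).prod = 1} => (h.1.map hv).prod)
    (fun _ => 1) (fun h => by rw [h.2.2, map_one])
  refine ⟨K, fun h h1 h2 => ?_⟩
  simpa [E] using hK ⟨h, h1, pr_eq_one.2 h2⟩

theorem main_rec : ∃ K, ∀ (k : ℕ) (h : List (KK × KK)), h.length ≤ 2 ^ k + 2 →
    (h.map hv).prod ∈ NN →
    Ar (K * (k + 1) * 4 ^ k) (2 * K * (k + 1) * 4 ^ k) (h.map hv).prod := by
  obtain ⟨K0, h0⟩ := base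
  obtain ⟨K1, h1⟩ := step
  refine ⟨K0 + 16 * K1, fun k => ?_⟩
  induction k with
  | zero =>
    intro h hl hh
    exact (h0 h (by simpa using hl) hh).mono (by simp <;> omega) (by simp <;> omega)
  | succ k ih =>
    intro h hl hh
    have r := h1 (2 ^ (k + 1) + 2) _ _ (fun h' hl' hm => ih h' (by
      rw [pow_succ] at hl'; omega) hm) h hl hh
    have hb : K1 * ((2 ^ (k + 1) + 2 + 1) * (2 ^ (k + 1) + 2 + 1)) ≤
        16 * K1 * (4 * 4 ^ k) := by
      have p1 : 1 ≤ 2 ^ (k + 1) := Nat.one_le_two_pow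
      have p2 : 2 ^ (k + 1) + 2 + 1 ≤ 4 * 2 ^ (k + 1) := by omega
      have p3 : (2 ^ (k + 1)) * (2 ^ (k + 1)) = 4 * 4 ^ k := by
        rw [← mul_pow, show 2 * 2 = 4 from rfl, pow_succ]; ring
      calc _ ≤ K1 * ((4 * 2 ^ (k + 1)) * (4 * 2 ^ (k + 1))) :=
            Nat.mul_le_mul le_rfl (Nat.mul_le_mul p2 p2)
        _ = 16 * K1 * ((2 ^ (k + 1)) * (2 ^ (k + 1))) := by ring
        _ = _ := by rw [p3]
    have hz : 0 ≤ K0 * 4 ^ k := Nat.zero_le _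
    have hz1 : 0 ≤ K1 * 4 ^ k := Nat.zero_le _
    have hz2 : 0 ≤ K1 * 4 ^ k * k := Nat.zero_le _
    have hz3 : 0 ≤ K0 * 4 ^ k * k := Nat.zero_le _
    refine r.mono ?_ ?_
    · rw [pow_succ 4 k]; nlinarith
    · rw [pow_succ 4 k]; nlinarith

def lm (x : L4 × Bool) : MM :=
  match x.1 with
  | L4.a => ((false, false), true, (false, false))
  | L4.b => ((true, true), false, (false, false))
  | L4.c => ((true, false), false, (false, false))
  | L4.d => ((false, true), false, (false, false))

def lv (x : L4 × Bool) : F4 := FreeGroup.mk [x]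

theorem lv_pr (x : L4 × Bool) : pr (lv x) = pr (mv (lm x)) := by
  have ht : ∀ y, lv (y, true) = FreeGroup.of y := fun y => rfl
  have hf : ∀ y, lv (y, false) = (FreeGroup.of y)⁻¹ := fun y => rfl
  have ea : pr (FreeGroup.of L4.a) = A := rfl
  have eb : pr (FreeGroup.of L4.b) = B := rfl
  have ec : pr (FreeGroup.of L4.c) = C := rfl
  have ed : pr (FreeGroup.of L4.d) = D := rfl
  have ga' : pr ga = A := rfl
  have gc' : pr gc = C := rfl
  have gd' : pr gd = D := rfl
  rcases x with ⟨y, _ | _⟩ <;> cases y <;>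
  simp only [ht, hf, map_inv, ga', gc', gd', mul_inv_rev, DC, ea, eb, ec, ed, Ai, Bi, Ci, Di, mv, lm, kv, aw, if_true,
    Bool.false_eq_true, if_false, map_mul, map_one, mul_one, one_mul, B_eq']

theorem lv_prod (l : List (L4 × Bool)) : (l.map lv).prod = FreeGroup.mk l := by
  induction l with
  | nil => rfl
  | cons x l ih => simp only [List.map_cons, List.prod_cons, ih, lv, FreeGroup.mul_mk]; rfl

instance : Finite L4 := Finite.of_injective
  (fun x : L4 => match x with
    | L4.a => (0 : Fin 4) | L4.b => 1 | L4.c => 2 | L4.d => 3)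
  (by intro x y h; cases x <;> cases y <;> simp_all)

theorem total : ∃ K, ∀ (k : ℕ) (W : F4), W ∈ NN → FreeGroup.norm W ≤ 2 ^ (k + 1) →
    ∃ L ≤ K * (k + 1) * 4 ^ k, IsProdConjPM Rinf L W := by
  obtain ⟨K0, h0⟩ := list_bound _ _ lv_pr
  obtain ⟨K1, h1⟩ := conv
  obtain ⟨K2, h2⟩ := main_rec
  refine ⟨4 * K0 + 6 * K1 + 3 * K2, fun k W hW hn => ?_⟩
  have e := h0 W.toWord
  rw [lv_prod, FreeGroup.mk_toWord] at e
  have hs : (W.toWord.map (fun i => mv (lm i))).prod = ((W.toWord.map lm).map mv).prod := by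
    rw [List.map_map]; rfl
  rw [hs] at e
  have hm : ((W.toWord.map lm).map mv).prod ∈ NN := by
    rw [← pr_eq_one, ← e.pr, pr_eq_one]; exact hW
  obtain ⟨h, hl, e2⟩ := h1 _ hm
  have hm2 : (h.map hv).prod ∈ NN := by
    rw [← pr_eq_one, ← e2.pr, pr_eq_one]; exact hm
  have hlen : W.toWord.length ≤ 2 ^ (k + 1) := hn
  rw [List.length_map] at hl e2
  have r := (e.trans e2).ar (h2 k h (by rw [pow_succ] at hlen; omega) hm2)
  obtain ⟨l, l1, l2, l3⟩ := r.toProd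
  refine ⟨l.length, l1.trans ?_, (isProd_iff _ _).2 ⟨l, rfl, l2, l3⟩⟩
  have p24 : 2 ^ k ≤ 4 ^ k := Nat.pow_le_pow_left (by norm_num) k
  have p1 : 1 ≤ 2 ^ k := Nat.one_le_two_pow
  have q1 : W.toWord.length ≤ 2 * 4 ^ k := by rw [pow_succ] at hlen; omega
  have q0 : K0 * W.toWord.length ≤ K0 * (2 * 4 ^ k) := Nat.mul_le_mul le_rfl q1
  have q2 : K1 * (W.toWord.length + 1) ≤ K1 * (3 * 4 ^ k) := Nat.mul_le_mul le_rfl (by omega)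
  have z0 : 0 ≤ K0 * 4 ^ k * k := Nat.zero_le _
  have z1 : 0 ≤ K1 * 4 ^ k * k := Nat.zero_le _
  nlinarith

end GDehn

/-- the Dehn 2-function of the Lysenok presentation of the
Grigorchuk 2-group `Γ` is bounded from above by `C₁ x² log₂ x`. -/
theorem grigorchuk_dehn_function_upper_bound :
    ∃ C₁ : ℝ, 1 < C₁ ∧
      ∀ x : ℕ, 2 ≤ x →
        ∀ W ∈ Subgroup.normalClosure Rinf, FreeGroup.norm W ≤ x →
          ∃ L : ℕ, (L : ℝ) ≤ C₁ * (x : ℝ) ^ 2 * Real.logb 2 (x : ℝ) ∧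
            IsProdConjPM Rinf L W := by
  obtain ⟨K, hK⟩ := GDehn.total
  refine ⟨2 * K + 2, by have : (0 : ℝ) ≤ K := Nat.cast_nonneg K
                        linarith, fun x hx W hW hn => ?_⟩
  have hlt : x < 2 ^ (Nat.log 2 x + 1) := Nat.lt_pow_succ_log_self (by norm_num) x
  have hle : 2 ^ (Nat.log 2 x) ≤ x := Nat.pow_log_le_self 2 (by omega)
  obtain ⟨L, hL, hP⟩ := hK (Nat.log 2 x) W hW (by omega)
  refine ⟨L, ?_, hP⟩
  have hx' : (2 : ℝ) ≤ x := by exact_mod_cast hx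
  have hlog1 : 1 ≤ Real.logb 2 x := by
    rw [Real.le_logb_iff_rpow_le (by norm_num) (by linarith)]
    simpa using hx'
  have hlogk : (Nat.log 2 x : ℝ) ≤ Real.logb 2 x := by
    rw [Real.le_logb_iff_rpow_le (by norm_num) (by linarith), Real.rpow_natCast]
    exact_mod_cast hle
  have h4 : (4 : ℝ) ^ (Nat.log 2 x) ≤ (x : ℝ) ^ 2 := by
    have : (2 : ℝ) ^ (Nat.log 2 x) ≤ x := by exact_mod_cast hle
    calc (4 : ℝ) ^ (Nat.log 2 x) = ((2 : ℝ) ^ (Nat.log 2 x)) ^ 2 := by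
          rw [← pow_mul, mul_comm, pow_mul]; norm_num
      _ ≤ _ := pow_le_pow_left₀ (by positivity) this 2
  have hL' : (L : ℝ) ≤ K * ((Nat.log 2 x : ℝ) + 1) * 4 ^ (Nat.log 2 x) := by exact_mod_cast hL
  calc (L : ℝ) ≤ K * ((Nat.log 2 x : ℝ) + 1) * 4 ^ (Nat.log 2 x) := hL'
    _ ≤ K * (2 * Real.logb 2 x) * (x : ℝ) ^ 2 := by
        gcongr
        linarith
    _ ≤ (2 * K + 2) * (x : ℝ) ^ 2 * Real.logb 2 x := by
        have : 0 ≤ (x : ℝ) ^ 2 * Real.logb 2 x := by positivity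
        nlinarith
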